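/- arXiv:1106.0742 — 3 statements merged into one kernel-verified Lean document; each statement's English description precedes it below -/
import Mathlib

section
/- Let $R$ be a commutative ring, $X, Y, Z$ be $m \times n$ matrices over $R$ with $s_1 \le m$, and fix column indices $a_1 < \dots < a_{s_1}$ and $1 \le r \le s_1$. For row indices $i,j$ and columns $c_1, c_2$, set $g_{ic_1, jc_2} = z_{ic_1}(x_{jc_2}-y_{jc_2}) - z_{jc_2}(x_{ic_1}-y_{ic_1})$. Then the determinant of the $s_1 \times s_1$ matrix with rows $Y_1,\dots,Y_{r-1}, Z_r, X_{r+1},\dots,X_{s_1}$ (restricted to columns $a_1,\dots,a_{s_1}$) equals the determinant of the matrix with rows $Y_1,\dots,Y_{r-1},Z_r,Y_{r+1},\dots,Y_{s_1}$ plus $\sum_{u=r+1}^{s_1} \det(\text{matrix with rows } Y_1,\dots,Y_{r-1}, X_r - Y_r, Y_{r+1},\dots,Y_{u-1}, Z_u, X_{u+1},\dots,X_{s_1})$ plus an element of the ideal generated by the elements $g_{rc_1,uc_2} - g_{rc_2,uc_1}$ for $r < u \le s_1$ and columns $c_1, c_2 \in \{a_1,\dots,a_{s_1}\}$. -/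
/-!
Put `W = X - Y`. Replacing the rows `X_u` (`r < u`) by `Y_u` one at a time telescopes the
difference of the first two determinants into a sum of determinants with `Z_r` in row `r` and
`W_u` in row `u`. Such a determinant depends on rows `r` and `u` only through their
`2 × 2` minors, linearly (`det_two_rows`). The generators of the ideal are exactly the
differences between the `2 × 2` minors of `(Z_r, W_u)` and those of `(W_r, Z_u)`, so modulo the
ideal the pair of rows `(Z_r, W_u)` may be exchanged for `(W_r, Z_u)` (`det_two_rows_sub_mem`).
-/

/-- Laplace expansion along the two rows `i` and `j`: the cofactors are the determinants with
standard basis vectors in these rows. -/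
lemma det_two_rows {R : Type*} [CommRing R] {s : ℕ} (M : Matrix (Fin s) (Fin s) R)
    {i j : Fin s} (hij : i ≠ j) (p q : Fin s → R) :
    ((M.updateRow i p).updateRow j q).det = ∑ c, ∑ d, if c < d then
      (p c * q d - p d * q c) *
        ((M.updateRow i (Pi.single c 1)).updateRow j (Pi.single d 1)).det else 0 := by
  set D : Fin s → Fin s → R := fun c d =>
    ((M.updateRow i (Pi.single c 1)).updateRow j (Pi.single d 1)).det with hD
  have expand : ∀ (N : Matrix (Fin s) (Fin s) R) (k : Fin s) (v : Fin s → R),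
      (N.updateRow k v).det = ∑ c, v c * (N.updateRow k (Pi.single c 1)).det := by
    intro N k v
    rw [Matrix.det_eq_sum_mul_adjugate_row _ k]
    simp [Matrix.adjugate_apply]
  have h1 : ((M.updateRow i p).updateRow j q).det = ∑ c, ∑ d, p c * q d * D c d := by
    rw [Matrix.updateRow_comm _ hij, expand]
    refine Finset.sum_congr rfl fun c _ => ?_
    rw [Matrix.updateRow_comm _ hij.symm, expand, Finset.mul_sum]
    exact Finset.sum_congr rfl fun d _ => by rw [mul_assoc]
  have hdiag : ∀ c, D c c = 0 := fun c =>
    Matrix.det_zero_of_row_eq hij (by simp [Matrix.updateRow_ne hij])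
  have hanti : ∀ c d, D c d = - D d c := by
    intro c d
    -- polarization: the vector `e_c + e_d` in both rows
    have h : ((M.updateRow i (Pi.single c 1 + Pi.single d 1)).updateRow j
        (Pi.single c 1 + Pi.single d 1)).det = 0 :=
      Matrix.det_zero_of_row_eq hij (by simp [Matrix.updateRow_ne hij])
    rw [Matrix.det_updateRow_add, Matrix.updateRow_comm _ hij, Matrix.det_updateRow_add,
      Matrix.updateRow_comm _ hij, Matrix.det_updateRow_add, Matrix.updateRow_comm _ hij.symm,
      Matrix.updateRow_comm _ hij.symm, Matrix.updateRow_comm _ hij.symm,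
      Matrix.updateRow_comm _ hij.symm] at h
    have hc := hdiag c
    have hd := hdiag d
    simp only [hD] at hc hd ⊢
    linear_combination h - hc - hd
  have h2 : ∀ c d, p c * q d * D c d = (if c < d then p c * q d * D c d else 0)
      + (if d < c then p c * q d * D c d else 0) := by
    intro c d
    rcases lt_trichotomy c d with h | h | h
    · rw [if_pos h, if_neg h.not_gt, add_zero]
    · subst h; simp [hdiag]
    · rw [if_neg h.not_gt, if_pos h, zero_add]
  rw [h1, Finset.sum_congr rfl fun c _ => Finset.sum_congr rfl fun d _ => h2 c d]
  simp only [Finset.sum_add_distrib]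
  rw [Finset.sum_comm (f := fun c d => if d < c then p c * q d * D c d else 0),
    ← Finset.sum_add_distrib]
  refine Finset.sum_congr rfl fun c _ => ?_
  rw [← Finset.sum_add_distrib]
  refine Finset.sum_congr rfl fun d _ => ?_
  split_ifs
  · rw [hanti d c]; ring
  · simp

/-- Two pairs of rows whose `2 × 2` minors agree modulo `I` give determinants that agree
modulo `I`. -/
lemma det_two_rows_sub_mem {R : Type*} [CommRing R] {s : ℕ} (I : Ideal R)
    (M : Matrix (Fin s) (Fin s) R) {i j : Fin s} (hij : i ≠ j) (p q p' q' : Fin s → R)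
    (h : ∀ c d, (p c * q d - p d * q c) - (p' c * q' d - p' d * q' c) ∈ I) :
    ((M.updateRow i p).updateRow j q).det - ((M.updateRow i p').updateRow j q').det ∈ I := by
  rw [det_two_rows M hij, det_two_rows M hij, ← Finset.sum_sub_distrib]
  refine I.sum_mem fun c _ => ?_
  rw [← Finset.sum_sub_distrib]
  refine I.sum_mem fun d _ => ?_
  split_ifs
  · rw [← sub_mul]
    exact I.mul_mem_right _ (h c d)
  · simp

/-- Lemma 4.4: the determinant with rows `Y₁,…,Y_{r-1}, Z_r, X_{r+1},…,X_{s₁}`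
(columns `a₁,…,a_{s₁}`) equals the corresponding determinant with all lower
rows from `Y`, plus the sum of the determinants with rows
`Y,…,Y, X_r - Y_r, Y,…,Y, Z_u, X,…,X`, plus an element of the ideal generated
by the differences of Koszul relations `g_{r c₁, u c₂} - g_{r c₂, u c₁}`. -/
theorem stmt_6 {R : Type*} [CommRing R] (m n s₁ : ℕ) (hs : s₁ ≤ m)
    (X Y Z : Matrix (Fin m) (Fin n) R)
    (a : Fin s₁ → Fin n) (ha : StrictMono a) (r : Fin s₁)
    (g : Fin s₁ → Fin n → Fin s₁ → Fin n → R)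
    (hg : ∀ i c j d, g i c j d =
      Z (Fin.castLE hs i) c * (X (Fin.castLE hs j) d - Y (Fin.castLE hs j) d)
      - Z (Fin.castLE hs j) d * (X (Fin.castLE hs i) c - Y (Fin.castLE hs i) c)) :
    ∃ e ∈ Ideal.span { w : R | ∃ u : Fin s₁, r < u ∧ ∃ c₁ c₂ : Fin s₁,
        w = g r (a c₁) u (a c₂) - g r (a c₂) u (a c₁) },
      (Matrix.of fun p q : Fin s₁ =>
          if p < r then Y (Fin.castLE hs p) (a q)
          else if p = r then Z (Fin.castLE hs p) (a q)
          else X (Fin.castLE hs p) (a q)).det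
      = (Matrix.of fun p q : Fin s₁ =>
          if p = r then Z (Fin.castLE hs p) (a q)
          else Y (Fin.castLE hs p) (a q)).det
        + (∑ u : Fin s₁,
            if r < u then
              (Matrix.of fun p q : Fin s₁ =>
                if p < r then Y (Fin.castLE hs p) (a q)
                else if p = r then
                  X (Fin.castLE hs p) (a q) - Y (Fin.castLE hs p) (a q)
                else if p < u then Y (Fin.castLE hs p) (a q)
                else if p = u then Z (Fin.castLE hs p) (a q)
                else X (Fin.castLE hs p) (a q)).det
            else 0)
        + e := by
  set I := Ideal.span { w : R | ∃ u : Fin s₁, r < u ∧ ∃ c₁ c₂ : Fin s₁,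
        w = g r (a c₁) u (a c₂) - g r (a c₂) u (a c₁) } with hI
  set A : Fin s₁ → Fin s₁ → R := fun p q => X (Fin.castLE hs p) (a q) with hA
  set B : Fin s₁ → Fin s₁ → R := fun p q => Y (Fin.castLE hs p) (a q) with hB
  set C : Fin s₁ → Fin s₁ → R := fun p q => Z (Fin.castLE hs p) (a q) with hC
  -- `F k` interpolates between the first determinant (`k = 0`) and the second (`k = s₁`):
  -- the rows below row `r` come from `Y` up to index `k` (exclusive) and from `X` afterwards.
  let F : ℕ → R := fun k => (Matrix.of fun p q : Fin s₁ =>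
    if p < r then B p q else if p = r then C p q
    else if (p : ℕ) < k then B p q else A p q).det
  let T : Fin s₁ → R := fun u => (Matrix.of fun p q : Fin s₁ =>
    if p < r then B p q else if p = r then A p q - B p q
    else if p < u then B p q else if p = u then C p q else A p q).det
  have hF0 : F 0 = (Matrix.of fun p q : Fin s₁ =>
      if p < r then B p q else if p = r then C p q else A p q).det := by
    simp [F]
  have hFs : F s₁ = (Matrix.of fun p q : Fin s₁ => if p = r then C p q else B p q).det := by
    simp only [F]
    congr 1
    ext p q
    simp only [Matrix.of_apply, p.isLt, if_true]
    by_cases h : p = r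
    · simp [h]
    · simp [h]
  have hstep : ∀ u : Fin s₁, (F u - F (u + 1)) - (if r < u then T u else 0) ∈ I := by
    intro u
    by_cases hu : r < u
    · rw [if_pos hu]
      let M : Matrix (Fin s₁) (Fin s₁) R := Matrix.of fun p q =>
        if p < r then B p q else if p < u then B p q else A p q
      have e1 : F u = ((M.updateRow r (C r)).updateRow u (B u + (A u - B u))).det := by
        simp only [F]
        congr 1
        ext p q
        simp only [M, Matrix.updateRow_apply, Matrix.of_apply, Pi.add_apply, Pi.sub_apply]
        grind
      have e2 : F (u + 1) = ((M.updateRow r (C r)).updateRow u (B u)).det := by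
        simp only [F]
        congr 1
        ext p q
        simp only [M, Matrix.updateRow_apply, Matrix.of_apply]
        grind
      have e3 : T u = ((M.updateRow r (A r - B r)).updateRow u (C u)).det := by
        simp only [T]
        congr 1
        ext p q
        simp only [M, Matrix.updateRow_apply, Matrix.of_apply, Pi.sub_apply]
        grind
      rw [e1, e2, e3, Matrix.det_updateRow_add, add_sub_cancel_left]
      refine det_two_rows_sub_mem I M hu.ne _ _ _ _ fun c d => ?_
      refine Ideal.subset_span ⟨u, hu, c, d, ?_⟩
      simp only [hg, Pi.sub_apply, hA, hB, hC]
      ring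
    · have e : F u = F (u + 1) := by
        simp only [F]
        congr 1
        ext p q
        simp only [Matrix.of_apply]
        grind
      simp [hu, e]
  have htel : ∑ u : Fin s₁, (F u - F (u + 1)) = F 0 - F s₁ := by
    rw [Fin.sum_univ_eq_sum_range (fun k => F k - F (k + 1)), Finset.sum_range_sub']
  refine ⟨∑ u : Fin s₁, ((F u - F (u + 1)) - (if r < u then T u else 0)),
    I.sum_mem fun u _ => hstep u, ?_⟩
  rw [Finset.sum_sub_distrib, htel]
  change _ = _ + (∑ u : Fin s₁, if r < u then T u else 0) + _
  rw [← hF0, ← hFs]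
  ring
end

section
/- Let $k$ be a field and $X, Y, Z$ be $m \times n$ matrices of variables with $s_1 \le m$, $s_2 \le s_1$, and $s_1 \le \min(t_1, t_2)$. For column indices $1 \le a_1 < \dots < a_{s_1} \le \min(t_1,t_2)$, define $f_{a_1,\dots,a_{s_1}} = \sum_{q=1}^{s_2} (-1)^{q+1} \det(A_q)$, where $A_q$ is the $s_1 \times s_1$ matrix with columns $a_1,\dots,a_{s_1}$ whose rows in order are $Z_q, Y_1, \dots, Y_{q-1}, X_{q+1}, \dots, X_{s_1}$. Then $f_{a_1,\dots,a_{s_1}}$ lies in the defining ideal $\mathcal{J} \subset k[X,Y,Z]$ of the symmetric algebra $\mathrm{Sym}_S(\mathbb{D})$. In particular, substituting $z_{ij} \mapsto x_{ij}-y_{ij}$ into $f_{a_1,\dots,a_{s_1}}$ yields an element of the ideal $(I_{s_1}(X_{s_1 t_1}), I_{s_2}(Y_{s_2 t_2}))$. -/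
/-!
Moving the row `Z_q` of `A_q` past `Y_1, …, Y_{q-1}` costs the sign `(-1)^(q-1)`
(`sign_mul_det_eq`), so `(-1)^(q+1) det A_q` is the determinant of the matrix with rows
`Y_1, …, Y_{q-1}, Z_q, X_{q+1}, …, X_{s₁}`. Write `D q` for the determinant of the matrix with rows
`Y_1, …, Y_q, X_{q+1}, …, X_{s₁}`. Replacing `Z_q` by `X_q - Y_q` turns the `q`-th summand into
`D (q - 1) - D q` (`det_updateRow_sub_eq`), and the sum telescopes to `D 0 - D s₂`.
Here `D 0` is a maximal minor of `X`, and Laplace expansion along the rows below the first `s₂`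
(`det_mem_of_minors_mem`) puts `D s₂` in the ideal of `s₂`-minors of `Y`.

Membership in `𝒥` requires in addition coefficients `c_ij` with `f = ∑ c_ij z_ij` and
`∑ c_ij (x_ij - y_ij) = D 0 - D s₂`, where the `c_ij` need not be computed: since a determinant is
linear in a row, the pair `(f, D 0 - D s₂)` lies in the submodule of `k[X,Y,Z]²` spanned by the
pairs `(z_ij, x_ij - y_ij)` (`det_updateRow_pair_mem`).
-/

open MvPolynomial

/-- The polynomial ring `k[X,Y,Z]` in three `m×n` matrices of variables. -/
abbrev PolyXYZ (k : Type*) [Field k] (m n : ℕ) : Type _ :=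
  MvPolynomial ((Fin m × Fin n) ⊕ (Fin m × Fin n) ⊕ (Fin m × Fin n)) k

variable {k : Type*} [Field k] {m n : ℕ}

/-- The `x`-variables. -/
noncomputable def xV (i : Fin m) (j : Fin n) : PolyXYZ k m n := X (Sum.inl (i, j))
/-- The `y`-variables. -/
noncomputable def yV (i : Fin m) (j : Fin n) : PolyXYZ k m n := X (Sum.inr (Sum.inl (i, j)))
/-- The `z`-variables. -/
noncomputable def zV (i : Fin m) (j : Fin n) : PolyXYZ k m n := X (Sum.inr (Sum.inr (i, j)))

/-- The ideal of maximal minors of the submatrix of the first `s` rows and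
first `t` columns of the matrix with entries `E`. -/
noncomputable def minorsIdeal {A : Type*} [CommRing A]
    (E : Fin m → Fin n → A) (s t : ℕ) (hsm : s ≤ m) : Ideal A :=
  Ideal.span { p | ∃ c : Fin s → Fin n, StrictMono c ∧ (∀ b, (c b).val < t) ∧
    p = (Matrix.of fun a b : Fin s => E (Fin.castLE hsm a) (c b)).det }

/-- The defining ideal `𝒥` of `Sym_S(𝔻)` inside `k[X,Y,Z]`. -/
noncomputable def symDefIdeal (k : Type*) [Field k] (m n s₁ t₁ s₂ t₂ : ℕ)
    (h₁ : s₁ ≤ m) (h₂ : s₂ ≤ m) : Ideal (PolyXYZ k m n) :=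
  (minorsIdeal xV s₁ t₁ h₁ ⊔ minorsIdeal yV s₂ t₂ h₂) ⊔
    Ideal.span { p | ∃ c : Fin m × Fin n → PolyXYZ k m n,
      (∑ ij : Fin m × Fin n, c ij * (xV ij.1 ij.2 - yV ij.1 ij.2))
          ∈ (minorsIdeal xV s₁ t₁ h₁ ⊔ minorsIdeal yV s₂ t₂ h₂ : Ideal (PolyXYZ k m n)) ∧
      p = ∑ ij : Fin m × Fin n, c ij * zV ij.1 ij.2 }

/-- If all maximal minors of the first `s` rows of a square matrix lie in `I`, so does its
determinant: expand along the last row repeatedly until only the first `s` rows are left. -/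
theorem det_mem_of_minors_mem {A : Type*} [CommRing A] (I : Ideal A) {s r : ℕ} (h : s ≤ r)
    (M : Matrix (Fin r) (Fin r) A)
    (hM : ∀ c : Fin s → Fin r, StrictMono c →
      (Matrix.of fun i j : Fin s => M (Fin.castLE h i) (c j)).det ∈ I) : M.det ∈ I := by
  induction r, h using Nat.le_induction with
  | base => exact hM id strictMono_id
  | succ r h ih =>
    rw [Matrix.det_succ_row M (Fin.last r)]
    refine Ideal.sum_mem _ fun j _ => Ideal.mul_mem_left _ _ (ih _ fun c hc => ?_)
    convert hM (j.succAbove ∘ c) ((Fin.strictMono_succAbove j).comp hc) using 3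
    ext i l
    simp only [Matrix.submatrix_apply, Fin.succAbove_last]
    rfl

/-- The matrix whose first `q` rows are those of `y` and whose other rows are those of `x`. -/
def hybrid {A : Type*} {s : ℕ} (x y : Fin s → Fin s → A) (q : ℕ) : Matrix (Fin s) (Fin s) A :=
  Matrix.of fun p t => if p.val < q then y p t else x p t

/-- Moving the top row `v` of `A_q` down to position `q`, which is a cyclic permutation of
the first `q` rows. -/
theorem sign_mul_det_eq {A : Type*} [CommRing A] {s : ℕ} (x y : Fin s → Fin s → A)
    (v : Fin s → A) (q : ℕ) (hq : 1 ≤ q) (hqs : q ≤ s) :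
    (-1 : A) ^ (q + 1) * (Matrix.of fun p t : Fin s =>
        if p.val = 0 then v t
        else if p.val < q then y ⟨p.val - 1, by omega⟩ t
        else x p t).det =
      ((hybrid x y q).updateRow ⟨q - 1, by omega⟩ v).det := by
  obtain ⟨q, rfl⟩ : ∃ q', q = q' + 1 := ⟨q - 1, by omega⟩
  set B : Matrix (Fin s) (Fin s) A := Matrix.of fun p t : Fin s =>
        if p.val = 0 then v t
        else if p.val < q + 1 then y ⟨p.val - 1, by omega⟩ t
        else x p t with hB
  have key : (hybrid x y (q + 1)).updateRow ⟨q + 1 - 1, by omega⟩ v =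
      B.submatrix (Fin.cycleRange ⟨q, by omega⟩) id := by
    have : NeZero s := ⟨by omega⟩
    ext p t
    rcases lt_trichotomy p.val q with h | h | h
    · have h' : p < (⟨q, by omega⟩ : Fin s) := h
      have hp : p ≠ (⟨q, by omega⟩ : Fin s) := h'.ne
      have e := Fin.coe_cycleRange_of_lt h'
      have h0 : Fin.cycleRange ⟨q, by omega⟩ p ≠ 0 := fun h0 => by simp [h0] at e
      simp [hB, hybrid, e, h, h.le, hp, h0]
    · have hp : p = (⟨q, by omega⟩ : Fin s) := Fin.ext h
      simp [hB, hp, Fin.cycleRange_self]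
    · have h' : (⟨q, by omega⟩ : Fin s) < p := h
      have hp : p ≠ (⟨q, by omega⟩ : Fin s) := h'.ne'
      have h0 : p ≠ 0 := fun h0 => by simp [h0] at h
      simp [hB, hybrid, Fin.cycleRange_of_gt h', hp, h0, not_le.mpr h]
  rw [key, Matrix.det_permute, Fin.sign_cycleRange]
  simp [pow_succ]

/-- The telescoping step: by additivity in row `q`, the row `X_q - Y_q` gives the difference of the
determinants with row `X_q` and with row `Y_q`. -/
theorem det_updateRow_sub_eq {A : Type*} [CommRing A] {s : ℕ} (x y : Fin s → Fin s → A)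
    (q : ℕ) (hq : 1 ≤ q) (hqs : q ≤ s) :
    ((hybrid x y q).updateRow ⟨q - 1, by omega⟩
        (x ⟨q - 1, by omega⟩ - y ⟨q - 1, by omega⟩)).det =
      (hybrid x y (q - 1)).det - (hybrid x y q).det := by
  have hx : (hybrid x y q).updateRow ⟨q - 1, by omega⟩ (x ⟨q - 1, by omega⟩) =
      hybrid x y (q - 1) := by
    ext p t
    by_cases hp : p = ⟨q - 1, by omega⟩
    · subst hp
      simp [hybrid]
    · have : p.val ≠ q - 1 := fun h => hp (Fin.ext h)
      have : p.val < q ↔ p.val < q - 1 := by omega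
      simp [hybrid, hp, this]
  have hy : (hybrid x y q).updateRow ⟨q - 1, by omega⟩ (y ⟨q - 1, by omega⟩) =
      hybrid x y q := by
    ext p t
    by_cases hp : p = ⟨q - 1, by omega⟩
    · subst hp
      simp [hybrid, show q - 1 < q by omega]
    · simp [hp]
  rw [← hx]
  conv_rhs => rw [← hy]
  rw [Matrix.updateRow_idem, sub_eq_add_neg, Matrix.det_updateRow_add,
    ← neg_one_smul A (y _), Matrix.det_updateRow_smul, hy]
  simp [sub_eq_add_neg]

/-- A determinant is a linear form in each row, with coefficients independent of that row;
hence a submodule of pairs containing the pairs of entries of two rows `v`, `w` contains the pair of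
determinants obtained by inserting `v` and `w` at the same place of a matrix. -/
theorem det_updateRow_pair_mem {A : Type*} [CommRing A] {s : ℕ} (N : Submodule A (A × A))
    (M : Matrix (Fin s) (Fin s) A) (i : Fin s) (v w : Fin s → A) (h : ∀ j, (v j, w j) ∈ N) :
    ((M.updateRow i v).det, (M.updateRow i w).det) ∈ N := by
  have key : ∀ u : Fin s → A, (M.updateRow i u).det =
      ∑ j, M.transpose.cramer (fun l => if j = l then 1 else 0) i * u j := by
    intro u
    rw [← Matrix.cramer_transpose_apply]
    have := LinearMap.pi_apply_eq_sum_univ ((LinearMap.proj i).comp M.transpose.cramer) u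
    simpa [mul_comm] using this
  rw [key v, key w]
  have := N.sum_mem (t := Finset.univ) fun j _ =>
    N.smul_mem (M.transpose.cramer (fun l => if j = l then 1 else 0) i) (h j)
  convert this using 1
  ext <;> simp [Prod.fst_sum, Prod.snd_sum]

/-- Lemma 2.4: the elements
`f_{a₁,…,a_{s₁}} = ∑_{q=1}^{s₂} (-1)^{q+1} det(Z_q; Y_1,…,Y_{q-1}; X_{q+1},…,X_{s₁})`
lie in the defining ideal `𝒥` of `Sym_S(𝔻)`; in particular substituting
`z_{ij} ↦ x_{ij} - y_{ij}` into `f` gives an element of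
`(I_{s₁}(X_{s₁t₁}), I_{s₂}(Y_{s₂t₂}))`. -/
theorem stmt_9 (s₁ t₁ s₂ t₂ : ℕ) (h₁ : s₁ ≤ m) (h₂ : s₂ ≤ m)
    (ht₁ : t₁ ≤ n) (ht₂ : t₂ ≤ n) (hs21 : s₂ ≤ s₁)
    (hst₁ : s₁ ≤ t₁) (hst₂ : s₁ ≤ t₂)
    (a : Fin s₁ → Fin n) (ha : StrictMono a)
    (hat : ∀ b, (a b).val < min t₁ t₂)
    (f : PolyXYZ k m n)
    (hf : f = ∑ q ∈ (Finset.Icc 1 s₂).attach,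
      (-1 : PolyXYZ k m n) ^ ((q : ℕ) + 1) *
        (Matrix.of fun p t : Fin s₁ =>
          if p.val = 0 then
            zV ⟨(q : ℕ) - 1, by have := Finset.mem_Icc.mp q.2; omega⟩ (a t)
          else if p.val < (q : ℕ) then
            yV ⟨p.val - 1, by omega⟩ (a t)
          else
            xV ⟨p.val, by omega⟩ (a t)).det) :
    f ∈ symDefIdeal k m n s₁ t₁ s₂ t₂ h₁ h₂ ∧
      (aeval (Sum.elim (fun ij : Fin m × Fin n => xV ij.1 ij.2)
        (Sum.elim (fun ij : Fin m × Fin n => yV ij.1 ij.2)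
          (fun ij : Fin m × Fin n => xV ij.1 ij.2 - yV ij.1 ij.2)))) f
        ∈ (minorsIdeal xV s₁ t₁ h₁ ⊔ minorsIdeal yV s₂ t₂ h₂ :
            Ideal (PolyXYZ k m n)) := by
  let x : Fin s₁ → Fin s₁ → PolyXYZ k m n := fun p t => xV (Fin.castLE h₁ p) (a t)
  let y : Fin s₁ → Fin s₁ → PolyXYZ k m n := fun p t => yV (Fin.castLE h₁ p) (a t)
  let z : Fin s₁ → Fin s₁ → PolyXYZ k m n := fun p t => zV (Fin.castLE h₁ p) (a t)
  have hq1 : ∀ q : Finset.Icc 1 s₂, 1 ≤ (q : ℕ) := fun q => (Finset.mem_Icc.mp q.2).1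
  have hq2 : ∀ q : Finset.Icc 1 s₂, (q : ℕ) ≤ s₁ :=
    fun q => (Finset.mem_Icc.mp q.2).2.trans hs21
  have hlt : ∀ q : Finset.Icc 1 s₂, (q : ℕ) - 1 < s₁ := fun q => by
    have := hq1 q; have := hq2 q; omega
  -- the summands with `Z_q` moved to its natural position, `Z` being an arbitrary matrix `w`
  let F : (Fin s₁ → Fin s₁ → PolyXYZ k m n) → PolyXYZ k m n := fun w =>
    ∑ q ∈ (Finset.Icc 1 s₂).attach,
      ((hybrid x y q).updateRow ⟨(q : ℕ) - 1, hlt q⟩ (w ⟨(q : ℕ) - 1, hlt q⟩)).det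
  have hfF : f = F z := by
    rw [hf]
    refine Finset.sum_congr rfl fun q _ => ?_
    exact sign_mul_det_eq x y (z ⟨(q : ℕ) - 1, hlt q⟩) q (hq1 q) (hq2 q)
  have hF : F (x - y) = (hybrid x y 0).det - (hybrid x y s₂).det := by
    have h1 : F (x - y) = ∑ q ∈ (Finset.Icc 1 s₂).attach,
        ((hybrid x y ((q : ℕ) - 1)).det - (hybrid x y q).det) :=
      Finset.sum_congr rfl fun q _ => det_updateRow_sub_eq x y q (hq1 q) (hq2 q)
    rw [h1, Finset.sum_attach (Finset.Icc 1 s₂)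
      (fun q => (hybrid x y (q - 1)).det - (hybrid x y q).det),
      ← Finset.sum_range_sub' (fun q => (hybrid x y q).det), Finset.range_eq_Ico]
    have := Finset.sum_Ico_add' (fun q => (hybrid x y (q - 1)).det - (hybrid x y q).det) 0 s₂ 1
    simp only [Nat.add_sub_cancel] at this
    rw [this]
    rfl
  have hmem : F (x - y) ∈ (minorsIdeal xV s₁ t₁ h₁ ⊔ minorsIdeal yV s₂ t₂ h₂ :
      Ideal (PolyXYZ k m n)) := by
    rw [hF]
    refine Ideal.sub_mem _ (Ideal.mem_sup_left (Ideal.subset_span ?_))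
      (Ideal.mem_sup_right ?_)
    · exact ⟨a, ha, fun b => (lt_min_iff.mp (hat b)).1, by simp [hybrid, x]⟩
    · refine det_mem_of_minors_mem _ hs21 _ fun c hc => Ideal.subset_span ?_
      refine ⟨a ∘ c, ha.comp hc, fun b => (lt_min_iff.mp (hat _)).2, ?_⟩
      congr 1
      ext i j
      simp [hybrid, y]
  refine ⟨?_, ?_⟩
  · refine Ideal.mem_sup_right (Ideal.subset_span ?_)
    let N : Submodule (PolyXYZ k m n) (PolyXYZ k m n × PolyXYZ k m n) :=
      Submodule.span _ (Set.range fun ij : Fin m × Fin n =>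
        ((zV ij.1 ij.2 : PolyXYZ k m n), (xV ij.1 ij.2 - yV ij.1 ij.2 : PolyXYZ k m n)))
    have hN : (F z, F (x - y)) ∈ N := by
      have := N.sum_mem (t := (Finset.Icc 1 s₂).attach) fun q _ =>
        det_updateRow_pair_mem N (hybrid x y q) ⟨(q : ℕ) - 1, hlt q⟩
          (z ⟨(q : ℕ) - 1, hlt q⟩) ((x - y) ⟨(q : ℕ) - 1, hlt q⟩)
          fun j => Submodule.subset_span ⟨(Fin.castLE h₁ ⟨(q : ℕ) - 1, hlt q⟩, a j), rfl⟩
      convert this using 1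
      ext <;> simp [F, Prod.fst_sum, Prod.snd_sum]
    obtain ⟨c, hc⟩ := (Submodule.mem_span_range_iff_exists_fun _).mp hN
    have hc1 := congrArg Prod.fst hc
    have hc2 := congrArg Prod.snd hc
    simp only [Prod.fst_sum, Prod.snd_sum, Prod.smul_fst, Prod.smul_snd, smul_eq_mul] at hc1 hc2
    exact ⟨c, hc2 ▸ hmem, by rw [hfF, hc1]⟩
  · convert hmem using 1
    rw [hfF]
    simp only [F, map_sum]
    refine Finset.sum_congr rfl fun q _ => ?_
    rw [AlgHom.map_det]
    congr 1
    ext1 p t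
    by_cases hp : p = ⟨(q : ℕ) - 1, hlt q⟩
    · subst hp
      simp [x, y, z, zV]
    · by_cases h : p.val < (q : ℕ) <;> simp [hp, hybrid, h, x, y, xV, yV]
end

section
/- Let $k$ be a field and $X$ an $m \times n$ matrix of variables with $m, n \ge 2$. Define the $(m-1)\times(n-1)$ matrix $X'$ over $k[X]_{x_{11}}$ by $x'_{ij} = x_{ij} - x_{i1}x_{1j}/x_{11}$ for $2 \le i \le m$, $2 \le j \le n$. Then for $2 \le s \le \min(m,n)$, the localized ideal $I_s(X)_{x_{11}} \subseteq k[X]_{x_{11}}$ of $s \times s$ minors of $X$ equals the extension of the ideal $I_{s-1}(X')$ of $(s-1)\times(s-1)$ minors of $X'$. -/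
/-!
Write the generic matrix over the localization as `M = Y + u v wᵀ`, where `u` is the inverse of the
pivot and `v`, `w` are the pivot column and row of `M`. Then `Y` has zero first row and column, and
the rest of `Y` is the matrix `X'`.

* Bordering a minor of `X'` with the pivot row and column gives a minor of `M` which, by the Schur
  complement formula (`det_eq_pivot_mul_det_schur`), is the pivot times the minor of `X'`. As the
  pivot is a unit, this gives one inclusion.
* A minor of `M` of size `t + 1` is a minor of `Y` changed by a matrix of rank one. It is a bordered
  determinant, and a double Laplace expansion along the border writes it as a combination of
  `t × t` minors of `Y` (`det_add_rankOne_mem`). Each of these has a zero row or column, or is a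
  minor of `X'`.

In the second part the row and column selections need not be increasing; `det_submatrix_mem`
reduces arbitrary selections to increasing ones.
-/

open MvPolynomial

/-- An ideal containing all minors with increasing row and column selections contains those with
arbitrary selections: such a minor vanishes or is, up to sign, one with increasing selections. -/
theorem det_submatrix_mem {A : Type*} [CommRing A] {m n t : ℕ} (Y : Matrix (Fin m) (Fin n) A)
    (K : Ideal A)
    (hK : ∀ (r : Fin t → Fin m) (c : Fin t → Fin n), StrictMono r → StrictMono c →
      (Y.submatrix r c).det ∈ K)
    (r : Fin t → Fin m) (c : Fin t → Fin n) : (Y.submatrix r c).det ∈ K := by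
  by_cases hr : Function.Injective r
  swap
  · simp only [Function.Injective, not_forall] at hr
    obtain ⟨a, b, hab, hne⟩ := hr
    rw [Matrix.det_zero_of_row_eq hne (by ext j; simp [hab])]
    exact K.zero_mem
  by_cases hc : Function.Injective c
  swap
  · simp only [Function.Injective, not_forall] at hc
    obtain ⟨a, b, hab, hne⟩ := hc
    rw [Matrix.det_zero_of_column_eq hne (by intro j; simp [hab])]
    exact K.zero_mem
  have hr' : StrictMono (r ∘ Tuple.sort r) :=
    (Tuple.monotone_sort r).strictMono_of_injective (hr.comp (Tuple.sort r).injective)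
  have hc' : StrictMono (c ∘ Tuple.sort c) :=
    (Tuple.monotone_sort c).strictMono_of_injective (hc.comp (Tuple.sort c).injective)
  have h := hK _ _ hr' hc'
  have e : Y.submatrix (r ∘ Tuple.sort r) (c ∘ Tuple.sort c)
      = ((Y.submatrix r c).submatrix (Tuple.sort r) id).submatrix id (Tuple.sort c) := rfl
  rw [e, Matrix.det_permute', Matrix.det_permute] at h
  have unit_mem : ∀ (z : ℤˣ) (x : A), ((z : ℤ) : A) * x ∈ K → x ∈ K := by
    intro z x hx
    rcases Int.units_eq_one_or z with rfl | rfl <;> simpa using hx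
  exact unit_mem _ _ (unit_mem _ _ h)

/-- The Schur complement formula for a `1 × 1` invertible block in the upper left corner. -/
theorem det_eq_pivot_mul_det_schur {A : Type*} [CommRing A] {t : ℕ}
    (N : Matrix (Fin (t + 1)) (Fin (t + 1)) A) (u : A) (hu : N 0 0 * u = 1) :
    N.det = N 0 0 * (Matrix.of fun i j : Fin t =>
      N i.succ j.succ - N i.succ 0 * N 0 j.succ * u).det := by
  let B : Matrix (Fin (t + 1)) (Fin (t + 1)) A := Matrix.of fun i j =>
    Fin.cases (N 0 j) (fun i' => N i'.succ j - N i'.succ 0 * u * N 0 j) i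
  have hB : N.det = B.det := by
    refine Matrix.det_eq_of_forall_row_eq_smul_add_const
      (fun i => Fin.cases 0 (fun i' => N i'.succ 0 * u) i) 0 rfl ?_
    intro i j
    refine Fin.cases ?_ (fun i' => ?_) i <;> simp [B]
  rw [hB, Matrix.det_succ_column_zero, Fin.sum_univ_succ, Finset.sum_eq_zero]
  · simp only [B, Fin.succAbove_zero, Matrix.of_apply, Fin.cases_zero, Fin.val_zero, pow_zero,
      one_mul, add_zero]
    congr 2
    ext i j
    simp only [Matrix.submatrix_apply, Matrix.of_apply, Fin.cases_succ]
    ring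
  · intro i _
    have h0 : B i.succ 0 = 0 := by
      simp only [B, Matrix.of_apply, Fin.cases_succ]
      linear_combination (-N i.succ 0) * hu
    rw [h0]
    ring

/-- An ideal containing all `t × t` minors of a square matrix of size `t + 1` contains the
determinant of every rank-one perturbation of that matrix. -/
theorem det_add_rankOne_mem {A : Type*} [CommRing A] {t : ℕ}
    (Y : Matrix (Fin (t + 1)) (Fin (t + 1)) A) (v w : Fin (t + 1) → A) (K : Ideal A)
    (hK : ∀ r c : Fin t → Fin (t + 1), (Y.submatrix r c).det ∈ K) :
    (Matrix.of fun i j => Y i j + v i * w j).det ∈ K := by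
  -- Eliminating the border of `B` with its corner entry `1` produces the perturbed matrix.
  let B : Matrix (Fin (t + 2)) (Fin (t + 2)) A := Matrix.of fun i j =>
    Fin.cases (Fin.cases 1 (fun j' => - w j') j)
      (fun i' => Fin.cases (v i') (fun j' => Y i' j') j) i
  have hB : (Matrix.of fun i j => Y i j + v i * w j).det = B.det := by
    rw [det_eq_pivot_mul_det_schur B 1 (by simp [B])]
    simp [B]
  rw [hB, Matrix.det_succ_row_zero]
  refine K.sum_mem fun j _ => K.mul_mem_left _ ?_
  rw [Matrix.det_succ_column_zero]
  refine K.sum_mem fun i _ => K.mul_mem_left _ ?_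
  -- Whichever column `j` was deleted first, the remaining columns avoid the border column `0`.
  have hne : ∀ l : Fin t, j.succAbove l.succ ≠ 0 := fun l h => by
    have h1 : j.succAbove 0 < j.succAbove l.succ :=
      Fin.strictMono_succAbove j (Fin.succ_pos l)
    rw [h] at h1
    exact absurd h1 (Fin.not_lt_zero _)
  choose c hc using fun l => Fin.exists_succ_eq_of_ne_zero (hne l)
  convert hK i.succAbove c using 2
  ext a b
  simp [B, ← hc]

/-- The standard localization argument for determinantal ideals: after
inverting the pivot `x₁₁`, the ideal of `s×s` minors of the generic
`(m+1)×(n+1)` matrix `X` equals the ideal of `(s-1)×(s-1)` minors of the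
`m×n` matrix `X'` with entries `x'_{ij} = x_{ij} - x_{i1}x_{1j}/x_{11}`. -/
theorem stmt_14 {k : Type*} [Field k] (m n s : ℕ)
    (hm : 1 ≤ m) (hn : 1 ≤ n) (hs2 : 2 ≤ s) (hsm : s ≤ m + 1) (hsn : s ≤ n + 1)
    (xv : Fin (m + 1) → Fin (n + 1) → MvPolynomial (Fin (m + 1) × Fin (n + 1)) k)
    (hx : ∀ i j, xv i j = X (i, j))
    (X' : Matrix (Fin m) (Fin n)
      (Localization.Away (xv 0 0)))
    (hX' : ∀ (i : Fin m) (j : Fin n),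
      X' i j = algebraMap _ _ (xv i.succ j.succ)
        - algebraMap _ _ (xv i.succ 0) * algebraMap _ _ (xv 0 j.succ)
            * IsLocalization.Away.invSelf (xv 0 0)) :
    Ideal.map (algebraMap (MvPolynomial (Fin (m + 1) × Fin (n + 1)) k)
        (Localization.Away (xv 0 0)))
      (Ideal.span { p | ∃ (r : Fin s → Fin (m + 1)) (c : Fin s → Fin (n + 1)),
        StrictMono r ∧ StrictMono c ∧
        p = (Matrix.of fun a b : Fin s => xv (r a) (c b)).det })
    = Ideal.span { q | ∃ (r : Fin (s - 1) → Fin m) (c : Fin (s - 1) → Fin n),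
        StrictMono r ∧ StrictMono c ∧
        q = (Matrix.of fun a b : Fin (s - 1) => X' (r a) (c b)).det } := by
  obtain ⟨t, rfl⟩ : ∃ t, s = t + 1 := ⟨s - 1, by omega⟩
  change _ = Ideal.span { q | ∃ (r : Fin t → Fin m) (c : Fin t → Fin n),
    StrictMono r ∧ StrictMono c ∧ q = (Matrix.of fun a b : Fin t => X' (r a) (c b)).det }
  set φ := algebraMap (MvPolynomial (Fin (m + 1) × Fin (n + 1)) k) (Localization.Away (xv 0 0))
    with hφ
  set u : Localization.Away (xv 0 0) := IsLocalization.Away.invSelf (xv 0 0) with hu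
  have hu1 : φ (xv 0 0) * u = 1 := IsLocalization.Away.mul_invSelf (xv 0 0)
  rw [Ideal.map_span]
  apply le_antisymm
  · rw [Ideal.span_le]
    rintro _ ⟨_, ⟨r, c, -, -, rfl⟩, rfl⟩
    rw [SetLike.mem_coe, RingHom.map_det]
    set K := Ideal.span { q | ∃ (r : Fin t → Fin m) (c : Fin t → Fin n),
        StrictMono r ∧ StrictMono c ∧
        q = (Matrix.of fun a b : Fin t => X' (r a) (c b)).det } with hKdef
    have hK := det_submatrix_mem X' K
      (fun r c hr hc => Ideal.subset_span ⟨r, c, hr, hc, rfl⟩)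
    let Y : Matrix (Fin (m + 1)) (Fin (n + 1)) (Localization.Away (xv 0 0)) :=
      Matrix.of fun i j => φ (xv i j) - φ (xv i 0) * φ (xv 0 j) * u
    have hY : ∀ (r : Fin t → Fin (m + 1)) (c : Fin t → Fin (n + 1)),
        (Y.submatrix r c).det ∈ K := by
      intro r c
      by_cases hr : ∃ a, r a = 0
      · obtain ⟨a, ha⟩ := hr
        rw [Matrix.det_eq_zero_of_row_eq_zero a]
        · exact K.zero_mem
        · intro j
          simp only [Y, Matrix.submatrix_apply, Matrix.of_apply, ha]
          linear_combination (-φ (xv 0 (c j))) * hu1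
      by_cases hc : ∃ a, c a = 0
      · obtain ⟨a, ha⟩ := hc
        rw [Matrix.det_eq_zero_of_column_eq_zero a]
        · exact K.zero_mem
        · intro i
          simp only [Y, Matrix.submatrix_apply, Matrix.of_apply, ha]
          linear_combination (-φ (xv (r i) 0)) * hu1
      push Not at hr hc
      choose r' hr' using fun a => Fin.exists_succ_eq_of_ne_zero (hr a)
      choose c' hc' using fun a => Fin.exists_succ_eq_of_ne_zero (hc a)
      convert hK r' c' using 2
      ext a b
      simp only [Y, Matrix.submatrix_apply, Matrix.of_apply, hX', hr', hc']
    have key := det_add_rankOne_mem (Y.submatrix r c) (fun i => φ (xv (r i) 0))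
      (fun j => φ (xv 0 (c j)) * u) K (fun r' c' => hY (r ∘ r') (c ∘ c'))
    convert key using 2
    ext a b
    simp only [Y, RingHom.mapMatrix_apply, Matrix.map_apply, Matrix.submatrix_apply,
      Matrix.of_apply]
    ring
  · rw [Ideal.span_le]
    rintro _ ⟨r, c, hr, hc, rfl⟩
    let r' : Fin (t + 1) → Fin (m + 1) := Fin.cases 0 fun a => (r a).succ
    let c' : Fin (t + 1) → Fin (n + 1) := Fin.cases 0 fun a => (c a).succ
    have hr' : StrictMono r' := by
      intro a b
      refine Fin.cases ?_ (fun a => ?_) a <;> refine Fin.cases ?_ (fun b => ?_) b <;>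
        simp [r', hr.lt_iff_lt]
    have hc' : StrictMono c' := by
      intro a b
      refine Fin.cases ?_ (fun a => ?_) a <;> refine Fin.cases ?_ (fun b => ?_) b <;>
        simp [c', hc.lt_iff_lt]
    have hS := det_eq_pivot_mul_det_schur
      (Matrix.of fun a b : Fin (t + 1) => φ (xv (r' a) (c' b))) u hu1
    have hX : (Matrix.of fun a b : Fin t => X' (r a) (c b)).det
        = u * φ (Matrix.of fun a b : Fin (t + 1) => xv (r' a) (c' b)).det := by
      have e : φ (Matrix.of fun a b : Fin (t + 1) => xv (r' a) (c' b)).det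
          = φ (xv 0 0) * (Matrix.of fun a b : Fin t => X' (r a) (c b)).det := by
        rw [RingHom.map_det]
        refine Eq.trans hS ?_
        simp only [hX']
        rfl
      rw [e]
      linear_combination (-(Matrix.of fun a b : Fin t => X' (r a) (c b)).det) * hu1
    rw [SetLike.mem_coe, hX]
    exact Ideal.mul_mem_left _ _ (Ideal.subset_span ⟨_, ⟨r', c', hr', hc', rfl⟩, rfl⟩)
end
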